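/- Robust pricing–hedging duality with traded calls: Suppose the market input (X_c, 𝒫, 𝔓) admits no weak free lunch with vanishing risk. Let G : ℝ₊^n → [−∞, ∞) be an upper semi-continuous function such that G(s₁,…,s_n) ≤ K(1 + s₁ + … + s_n) on ℝ₊^n for some constant K. Then the superhedging price equals the supremum of the expectation over market calibrated models: sup{E_ℙ[G(S)] : ℙ a market calibrated model} = inf{𝒫(X) : there exists an admissible (X, Δ) with Ψ_{X,Δ} ≥ G on 𝔓}. -/

import Mathlib

open MeasureTheory Set Filter Topology
open scoped ENNReal NNReal Classical

noncomputable section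

namespace RobustFin

/-- Canonical path space: the values `S₀, S₁, …, S_n` of the asset. -/
abbrev Path (n : ℕ) := Fin (n + 1) → ℝ

/-- Paths starting at `s₀` with nonnegative coordinates: the canonical space `Ω`. -/
def Omega (n : ℕ) (s₀ : ℝ) : Set (Path n) := {ω | ω 0 = s₀ ∧ ∀ i, 0 ≤ ω i}

/-- The first `j` coordinates `S₁, …, S_j` of a path. -/
def restr {n : ℕ} (j : Fin n) (ω : Path n) : Fin j → ℝ :=
  fun i => ω ⟨(i : ℕ) + 1, by have h1 := i.isLt; have h2 := j.isLt; omega⟩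

/-- The coordinates `S₁, …, S_n` of a path. -/
def tailCoords {n : ℕ} (ω : Path n) : Fin n → ℝ := fun i => ω i.succ

/-- A dynamic trading strategy: bounded measurable positions `Δ_j(S₁,…,S_j)`. -/
structure Dyn (n : ℕ) where
  pos : (j : Fin n) → (Fin j → ℝ) → ℝ
  meas : ∀ j, Measurable (pos j)
  bdd : ∀ j, ∃ C, ∀ x, |pos j x| ≤ C

/-- No short selling: all dynamic positions are nonnegative. -/
def Dyn.Nonneg {n : ℕ} (D : Dyn n) : Prop := ∀ j x, 0 ≤ D.pos j x

/-- Gains from dynamic trading: `Σ_j Δ_j(S₁,…,S_j)(S_{j+1} − S_j)`. -/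
def Dyn.gains {n : ℕ} (D : Dyn n) (ω : Path n) : ℝ :=
  ∑ j : Fin n, D.pos j (restr j ω) * (ω j.succ - ω j.castSucc)

/-- A static option portfolio: a constant (cash) position plus a finite linear
combination of options with maturity indices `idx` and nonnegative strikes. -/
structure Static (n : ℕ) where
  const : ℝ
  m : ℕ
  coeff : Fin m → ℝ
  idx : Fin m → Fin n
  strike : Fin m → ℝ
  strike_nonneg : ∀ k, 0 ≤ strike k

/-- Payoff of the portfolio when the options are call options. -/
def Static.callPayoff {n : ℕ} (X : Static n) (ω : Path n) : ℝ :=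
  X.const + ∑ k, X.coeff k * max (ω (X.idx k).succ - X.strike k) 0

/-- Payoff of the portfolio when the options are put options. -/
def Static.putPayoff {n : ℕ} (X : Static n) (ω : Path n) : ℝ :=
  X.const + ∑ k, X.coeff k * max (X.strike k - ω (X.idx k).succ) 0

/-- Price of a static portfolio, given the unit option prices `c i K`;
this is the (unique) linear pricing functional determined by the prices. -/
def Static.price {n : ℕ} (X : Static n) (c : Fin n → ℝ → ℝ) : ℝ :=
  X.const + ∑ k, X.coeff k * c (X.idx k) (X.strike k)

/-- Expectation of a real payoff, valued in `EReal`, with the convention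
`∞ − ∞ = −∞` (in `EReal`, `⊤ - ⊤ = ⊥`). -/
def eexp {n : ℕ} (P : Measure (Path n)) (f : Path n → ℝ) : EReal :=
  ((∫⁻ ω, ENNReal.ofReal (f ω) ∂P : ℝ≥0∞) : EReal) -
    ((∫⁻ ω, ENNReal.ofReal (-(f ω)) ∂P : ℝ≥0∞) : EReal)

/-- The positive part of an extended real number, in `ℝ≥0∞`. -/
def posE (x : EReal) : ℝ≥0∞ := if x = ⊤ then ⊤ else ENNReal.ofReal x.toReal

/-- Expectation of an `EReal`-valued payoff, with the convention `∞ − ∞ = −∞`. -/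
def eexpE {n : ℕ} (P : Measure (Path n)) (f : Path n → EReal) : EReal :=
  ((∫⁻ ω, posE (f ω) ∂P : ℝ≥0∞) : EReal) - ((∫⁻ ω, posE (-(f ω)) ∂P : ℝ≥0∞) : EReal)

/-- A market calibrated model for the market with static payoffs `pay` (calls or puts),
prices `c` and prediction set `P`. -/
def Calibrated {n : ℕ} (pay : Static n → Path n → ℝ) (c : Fin n → ℝ → ℝ)
    (P : Set (Path n)) (Q : Measure (Path n)) : Prop :=
  IsProbabilityMeasure Q ∧ Q P = 1 ∧
    ∀ (X : Static n) (D : Dyn n), D.Nonneg →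
      eexp Q (fun ω => pay X ω + D.gains ω) ≤ (X.price c : EReal)

/-- A weak free lunch with vanishing risk. -/
def WFLVR {n : ℕ} (pay : Static n → Path n → ℝ) (c : Fin n → ℝ → ℝ)
    (P : Set (Path n)) : Prop :=
  ∃ (Xs : ℕ → Static n) (Ds : ℕ → Dyn n) (X : Static n) (D : Dyn n) (L : ℝ),
    (∀ k, (Ds k).Nonneg) ∧ D.Nonneg ∧
    (∀ ω ∈ P, Tendsto (fun k => pay (Xs k) ω + (Ds k).gains ω) atTop (nhds 0)) ∧
    (∀ k, ∀ ω ∈ P, pay X ω + D.gains ω ≤ pay (Xs k) ω + (Ds k).gains ω) ∧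
    Tendsto (fun k => (Xs k).price c) atTop (nhds L) ∧ L < 0

/-- A robust uniformly strong arbitrage. -/
def RobustArbitrage {n : ℕ} (pay : Static n → Path n → ℝ) (c : Fin n → ℝ → ℝ)
    (P : Set (Path n)) : Prop :=
  ∃ (X : Static n) (D : Dyn n), D.Nonneg ∧ X.price c < 0 ∧
    ∀ ω ∈ P, 0 ≤ pay X ω + D.gains ω

/-- The superhedging price of `G` over semi-static strategies (no short selling). -/
def V {n : ℕ} (pay : Static n → Path n → ℝ) (c : Fin n → ℝ → ℝ)
    (P : Set (Path n)) (G : Path n → EReal) : EReal :=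
  sInf {q : EReal | ∃ (X : Static n) (D : Dyn n), D.Nonneg ∧ q = (X.price c : EReal) ∧
    ∀ ω ∈ P, G ω ≤ ((pay X ω + D.gains ω : ℝ) : EReal)}

/-- The superhedging price of `G` when the dynamic positions may take both signs. -/
def Vsigned {n : ℕ} (pay : Static n → Path n → ℝ) (c : Fin n → ℝ → ℝ)
    (P : Set (Path n)) (G : Path n → EReal) : EReal :=
  sInf {q : EReal | ∃ (X : Static n) (D : Dyn n), q = (X.price c : EReal) ∧
    ∀ ω ∈ P, G ω ≤ ((pay X ω + D.gains ω : ℝ) : EReal)}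

/-- `Π_μ`: probability measures on the path space with marginals `δ_{s₀}, μ₁, …, μ_n`. -/
def PiMu {n : ℕ} (s₀ : ℝ) (μ : Fin n → Measure ℝ) : Set (Measure (Path n)) :=
  {π | IsProbabilityMeasure π ∧ π (Omega n s₀) = 1 ∧
       ∀ i : Fin n, π.map (fun ω => ω i.succ) = μ i}

/-- The coordinate process is a supermartingale in its natural filtration:
for every Borel `A ⊆ ℝ₊^j`, `∫ 1_A(S₁,…,S_j)(S_{j+1} − S_j) dπ ≤ 0`. -/
def IsSupermartingaleLaw {n : ℕ} (π : Measure (Path n)) : Prop :=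
  ∀ (j : Fin n) (A : Set (Fin j → ℝ)), MeasurableSet A →
    ∫ ω, Set.indicator A (fun _ => (1 : ℝ)) (restr j ω) * (ω j.succ - ω j.castSucc) ∂π ≤ 0

/-- `M⁻_μ`: calibrated supermartingale measures. -/
def MSet {n : ℕ} (s₀ : ℝ) (μ : Fin n → Measure ℝ) : Set (Measure (Path n)) :=
  {π ∈ PiMu s₀ μ | IsSupermartingaleLaw π}

/-- `M⁻_{μ,𝔓}`: calibrated supermartingale measures giving full mass to `P`. -/
def MSetP {n : ℕ} (s₀ : ℝ) (μ : Fin n → Measure ℝ) (P : Set (Path n)) :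
    Set (Measure (Path n)) :=
  {π ∈ MSet s₀ μ | π P = 1}

/-- Assumption A on the marginals. -/
def AssumptionA {n : ℕ} (s₀ : ℝ) (μ : Fin n → Measure ℝ) : Prop :=
  (∀ i, ∫ x, x ∂(μ i) ≤ s₀) ∧
  (∀ i j : Fin n, i ≤ j → ∫ x, x ∂(μ j) ≤ ∫ x, x ∂(μ i)) ∧
  (∀ φ : ℝ → ℝ, ConcaveOn ℝ Set.univ φ → Monotone φ → (∀ x, 0 ≤ φ x) →
    ∀ i j : Fin n, i ≤ j → ∫ x, φ x ∂(μ j) ≤ ∫ x, φ x ∂(μ i))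

/-- Condition C (i): each `c_i` is nonnegative, convex and nonincreasing on `ℝ₊`. -/
def CondC1 {n : ℕ} (c : Fin n → ℝ → ℝ) : Prop :=
  ∀ i, (∀ x, 0 ≤ x → 0 ≤ c i x) ∧ ConvexOn ℝ (Set.Ici 0) (c i) ∧ AntitoneOn (c i) (Set.Ici 0)

/-- Condition C (ii): `s₀ ≥ c₁(0) ≥ … ≥ c_n(0) ≥ 0` and `c_i'(0+) ≥ −1`
(the latter expressed, for convex `c_i`, through the slopes at `0`). -/
def CondC2 {n : ℕ} (s₀ : ℝ) (c : Fin n → ℝ → ℝ) : Prop :=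
  (∀ i, c i 0 ≤ s₀) ∧ (∀ i j : Fin n, i ≤ j → c j 0 ≤ c i 0) ∧ (∀ i, 0 ≤ c i 0) ∧
    (∀ i, ∀ K : ℝ, 0 < K → c i 0 - K ≤ c i K)

/-- Condition C (iii): `c_i(K) → 0` as `K → ∞`. -/
def CondC3 {n : ℕ} (c : Fin n → ℝ → ℝ) : Prop :=
  ∀ i, Tendsto (c i) atTop (nhds 0)

/-- Condition C (iv): for every `x ≥ 0`, `c_i(0) − c_i(x)` is nonincreasing in `i`. -/
def CondC4 {n : ℕ} (c : Fin n → ℝ → ℝ) : Prop :=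
  ∀ x : ℝ, 0 ≤ x → ∀ i j : Fin n, i ≤ j → c j 0 - c j x ≤ c i 0 - c i x

/-- Condition C. -/
def CondC {n : ℕ} (s₀ : ℝ) (c : Fin n → ℝ → ℝ) : Prop :=
  CondC1 c ∧ CondC2 s₀ c ∧ CondC3 c ∧ CondC4 c

/-- Condition P (i). -/
def CondP1 {n : ℕ} (p : Fin n → ℝ → ℝ) : Prop :=
  ∀ i, (∀ x, 0 ≤ x → 0 ≤ p i x) ∧ ConvexOn ℝ (Set.Ici 0) (p i) ∧ MonotoneOn (p i) (Set.Ici 0)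

/-- Condition P (ii): `s₀ ≥ lim (x − p₁(x)) ≥ … ≥ 0` and `0 ≤ p_i'(0+) ≤ 1`. -/
def CondP2 {n : ℕ} (s₀ : ℝ) (p : Fin n → ℝ → ℝ) : Prop :=
  (∃ L : Fin n → ℝ,
    (∀ i, Tendsto (fun x => x - p i x) atTop (nhds (L i))) ∧
    (∀ i, L i ≤ s₀) ∧ (∀ i j : Fin n, i ≤ j → L j ≤ L i) ∧ (∀ i, 0 ≤ L i)) ∧
  (∃ d : Fin n → ℝ,
    (∀ i, Tendsto (fun K => (p i K - p i 0) / K) (nhdsWithin 0 (Set.Ioi 0)) (nhds (d i))) ∧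
    (∀ i, 0 ≤ d i ∧ d i ≤ 1))

/-- Condition P (iii): `p_i(K) → 0` as `K → 0` (within `ℝ₊`). -/
def CondP3 {n : ℕ} (p : Fin n → ℝ → ℝ) : Prop :=
  ∀ i, Tendsto (p i) (nhdsWithin 0 (Set.Ici 0)) (nhds 0)

/-- Condition P (iv): `p_i(x)` is nondecreasing in `i`. -/
def CondP4 {n : ℕ} (p : Fin n → ℝ → ℝ) : Prop :=
  ∀ x : ℝ, 0 ≤ x → ∀ i j : Fin n, i ≤ j → p i x ≤ p j x

/-- Condition P. -/
def CondP {n : ℕ} (s₀ : ℝ) (p : Fin n → ℝ → ℝ) : Prop :=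
  CondP1 p ∧ CondP2 s₀ p ∧ CondP3 p ∧ CondP4 p

/-- The measures `μ_i` defined from the put prices by `μ_i([0,K]) = p_i'(K)`;
equivalently, `p_i(K) = ∫ (K − x)⁺ μ_i(dx)`. -/
def PutPricesFrom {n : ℕ} (p : Fin n → ℝ → ℝ) (μ : Fin n → Measure ℝ) : Prop :=
  (∀ i, IsProbabilityMeasure (μ i)) ∧ (∀ i, μ i (Set.Iio 0) = 0) ∧
  (∀ i, Integrable (fun x => x) (μ i)) ∧
  (∀ i, ∀ K : ℝ, 0 ≤ K → p i K = ∫ x, max (K - x) 0 ∂(μ i))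

/-- The path `(s₀, s₁, …, s_i, x, s_{i+2}, …, s_n)`. -/
def mkPath {n : ℕ} (s₀ : ℝ) (i : Fin n) (s : Fin i → ℝ) (x : ℝ)
    (t : Fin (n - ((i : ℕ) + 1)) → ℝ) : Path n := fun j =>
  if h0 : (j : ℕ) = 0 then s₀
  else if h1 : (j : ℕ) ≤ (i : ℕ) then
    s ⟨(j : ℕ) - 1, by have := j.isLt; have := i.isLt; omega⟩
  else if h2 : (j : ℕ) = (i : ℕ) + 1 then x
  else t ⟨(j : ℕ) - (i : ℕ) - 2, by have := j.isLt; have := i.isLt; omega⟩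

/-- The family `β_i : ℝ₊^i → ℝ` defined recursively by `β_n = 0` and
`β_i(s₁,…,s_i) = (sup_{s_{i+2},…,s_n} limsup_{x→∞} ((β_{i+1}(s₁,…,s_i,x)
 + G(s₁,…,s_i,x,s_{i+2},…,s_n)/x)·1_𝔓)) ∨ 0`. -/
def IsBetaFamily {n : ℕ} (s₀ : ℝ) (P : Set (Path n)) (G : (Fin n → ℝ) → EReal)
    (β : (i : Fin (n + 1)) → (Fin i → ℝ) → ℝ) : Prop :=
  (∀ s, β (Fin.last n) s = 0) ∧
  ∀ (i : Fin n) (s : Fin i → ℝ), (∀ k, 0 ≤ s k) →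
    (β ⟨(i : ℕ), by have := i.isLt; omega⟩ s : EReal) =
      max 0 (⨆ (t : Fin (n - ((i : ℕ) + 1)) → ℝ) (_ : ∀ k, 0 ≤ t k),
        Filter.limsup (fun x : ℝ =>
          if mkPath s₀ i s x t ∈ P then
            ((β ⟨(i : ℕ) + 1, by have := i.isLt; omega⟩ (Fin.snoc s x) : ℝ) : EReal)
              + G (tailCoords (mkPath s₀ i s x t)) * ((x⁻¹ : ℝ) : EReal)
          else 0) Filter.atTop)

/-- Gains of the dynamic strategy `(β_i)`: `β₀(S₁ − s₀) + Σ_i β_i(S₁,…,S_i)(S_{i+1} − S_i)`. -/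
def gainsOf {n : ℕ} (β : (i : Fin (n + 1)) → (Fin i → ℝ) → ℝ) (ω : Path n) : ℝ :=
  ∑ j : Fin n, β ⟨(j : ℕ), by have := j.isLt; omega⟩ (restr j ω) * (ω j.succ - ω j.castSucc)

/-- The penalty function `λ_𝔓(s₁,…,s_n) = (1 + s₁ + … + s_n)·1{(s₁,…,s_n) ∉ 𝔓}`. -/
def lambdaP {n : ℕ} (P : Set (Path n)) (ω : Path n) : ℝ :=
  if ω ∈ P then 0 else 1 + ∑ i : Fin n, ω i.succ

/-- `min(s₀, s₁, …, s_m)`. -/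
def pmin {m : ℕ} (s₀ : ℝ) (s : Fin m → ℝ) : ℝ :=
  Finset.univ.inf' Finset.univ_nonempty
    (fun j : Fin (m + 1) =>
      if h : (j : ℕ) = 0 then s₀ else s ⟨(j : ℕ) - 1, by have := j.isLt; omega⟩)

/-- `max(s₀, s₁, …, s_m)`. -/
def pmax {m : ℕ} (s₀ : ℝ) (s : Fin m → ℝ) : ℝ :=
  Finset.univ.sup' Finset.univ_nonempty
    (fun j : Fin (m + 1) =>
      if h : (j : ℕ) = 0 then s₀ else s ⟨(j : ℕ) - 1, by have := j.isLt; omega⟩)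

/-!
In the absence of a weak free lunch, no call price has a positive limit at large strikes.
If the market has a robust arbitrage, the superhedging price is `-∞` and there is nothing to prove;
otherwise call prices are nonnegative and nonincreasing in the strike, hence tend to zero.

The pairs `(f, p)` for which `f` can be superhedged at cost `p` form a convex cone. Given a real `v`
below the superhedging price of `G`, this cone stays arbitrage-free when every continuous majorant
of `G` of linear growth may be sold at price `v`, so M. Riesz extension yields a linear functional
dominated by the superhedging cost and at least `v` on these majorants. Since calls with large
strikes are cheap, the functional is tight with respect to the weight `1 + ‖ω‖`, and Riesz–Markov
represents it by a measure. Testing it on the distance to the prediction set, on options and on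
continuous trading strategies shows that this measure is a calibrated model. Finally `G`, set to
`-∞` off the closed prediction set, is the decreasing limit of continuous majorants, so monotone
convergence gives it expectation at least `v`.
-/

section Sandwich

variable {E : Type*} [AddCommGroup E] [Module ℝ E] (D : PointedCone ℝ (E × ℝ)) {B : Set E} {v : ℝ}

/-- The cone generated by `D` and the points `-(b, v)`, `b ∈ B`: the superhedging relation of a
market in which every `b ∈ B` may moreover be sold at the price `v`. -/
def coneSelling (hB : Convex ℝ B) (hBne : B.Nonempty) (v : ℝ) : PointedCone ℝ (E × ℝ) where
  carrier := {y | ∃ t : ℝ, 0 ≤ t ∧ ∃ b ∈ B, y + t • (b, v) ∈ D}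
  zero_mem' := ⟨0, le_rfl, hBne.some, hBne.some_mem, by simp⟩
  add_mem' := by
    rintro y z ⟨s, hs, b, hb, hy⟩ ⟨t, ht, d, hd, hz⟩
    obtain ⟨e, he, hsum⟩ := hB.exists_mem_add_smul_eq hb hd hs ht
    refine ⟨s + t, add_nonneg hs ht, e, he, ?_⟩
    have hsplit : (s + t) • (e, v) = s • (b, v) + t • (d, v) := by
      ext <;> simp [hsum, add_mul]
    rw [hsplit, add_add_add_comm]
    exact D.add_mem hy hz
  smul_mem' := by
    rintro r y ⟨t, ht, b, hb, hy⟩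
    refine ⟨r * t, mul_nonneg r.2 ht, b, hb, ?_⟩
    have := D.smul_mem r.2 hy
    rwa [smul_add, ← mul_smul] at this

variable {D}

theorem nonneg_of_zero_mk_mem_coneSelling (hD : ∀ x, ∃ p, (x, p) ∈ D) (hB : Convex ℝ B)
    (hBne : B.Nonempty) (hv : ∀ b ∈ B, ∀ p, (b, p) ∈ D → v ≤ p) {a : ℝ}
    (ha : ((0 : E), a) ∈ coneSelling D hB hBne v) : 0 ≤ a := by
  obtain ⟨t, ht, b, hb, hmem⟩ := ha
  simp only [Prod.smul_mk, Prod.mk_add_mk, zero_add, smul_eq_mul] at hmem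
  by_contra! ha
  obtain rfl | ht := ht.eq_or_lt
  · obtain ⟨p, hp⟩ := hD b
    obtain ⟨k, hk⟩ := exists_nat_gt ((v - p) / a)
    have hadd := D.add_mem hp (D.smul_mem (Nat.cast_nonneg k) hmem)
    have := hv b hb (p + k * a) (by simpa using hadd)
    rw [div_lt_iff_of_neg ha] at hk
    linarith
  · have := hv b hb (t⁻¹ * (a + t * v)) (by
      simpa [ht.ne'] using D.smul_mem (inv_nonneg.2 ht.le) hmem)
    rw [mul_add, inv_mul_cancel_left₀ ht.ne'] at this
    have := mul_neg_of_pos_of_neg (inv_pos.2 ht) ha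
    linarith

theorem exists_linearMap_le_of_convex (hD : ∀ x, ∃ p, (x, p) ∈ D) (hB : Convex ℝ B)
    (hBne : B.Nonempty) (hv : ∀ b ∈ B, ∀ p, (b, p) ∈ D → v ≤ p) :
    ∃ ℓ : E →ₗ[ℝ] ℝ, (∀ x p, (x, p) ∈ D → ℓ x ≤ p) ∧ ∀ b ∈ B, v ≤ ℓ b := by
  let f : E × ℝ →ₗ.[ℝ] ℝ := ⟨Submodule.prod ⊥ ⊤, LinearMap.snd ℝ E ℝ ∘ₗ Submodule.subtype _⟩
  have hf : ∀ y : f.domain, (y : E × ℝ) ∈ coneSelling D hB hBne v → 0 ≤ f y := by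
    rintro ⟨⟨x, a⟩, hx, _⟩ hmem
    obtain rfl : x = 0 := hx
    exact nonneg_of_zero_mk_mem_coneSelling hD hB hBne hv hmem
  have hdense : ∀ y, ∃ z : f.domain, (z : E × ℝ) + y ∈ coneSelling D hB hBne v := by
    rintro ⟨x, a⟩
    obtain ⟨p, hp⟩ := hD x
    exact ⟨⟨(0, p - a), rfl, trivial⟩, 0, le_rfl, hBne.some, hBne.some_mem, by simpa using hp⟩
  obtain ⟨g, hgf, hg⟩ := riesz_extension _ f hf hdense
  have hg_mk : ∀ x a, g (x, a) = a + g (x, 0) := fun x a ↦ by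
    have hg_zero_mk : g (0, a) = a := hgf ⟨(0, a), rfl, trivial⟩
    calc g (x, a) = g ((0, a) + (x, 0)) := by simp
      _ = a + g (x, 0) := by rw [map_add, hg_zero_mk]
  refine ⟨-(g ∘ₗ LinearMap.inl ℝ E ℝ), fun x p hxp ↦ ?_, fun b hb ↦ ?_⟩
  · have := hg (x, p) ⟨0, le_rfl, hBne.some, hBne.some_mem, by simpa using hxp⟩
    rw [hg_mk] at this
    change -g (x, 0) ≤ p
    linarith
  · have := hg (-(b, v)) ⟨1, zero_le_one, b, hb, by simp [← Prod.zero_eq_mk]⟩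
    rw [map_neg, hg_mk] at this
    change v ≤ -g (b, 0)
    linarith

end Sandwich

section WeightedRiesz

open Asymptotics
open scoped CompactlySupported

variable {X : Type*} [TopologicalSpace X]

/-- The space of continuous functions dominated by a multiple of the weight `T`. -/
def weightedContinuous (T : X → ℝ) : Submodule ℝ C(X, ℝ) where
  carrier := {f | f =O[⊤] T}
  zero_mem' := isBigO_zero _ _
  add_mem' := IsBigO.add
  smul_mem' r _ hf := hf.const_smul_left r

/-- A sequence of compactly supported cutoffs exhausting `X`. -/
structure IsCutoffSequence (χ : ℕ → C_c(X, ℝ)) : Prop where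
  mem_Icc : ∀ n x, χ n x ∈ Icc 0 1
  eventually_eq_one : ∀ K, IsCompact K → ∀ᶠ n in atTop, ∀ x ∈ K, χ n x = 1

theorem exists_isCutoffSequence (X : Type*) [TopologicalSpace X] [T2Space X]
    [LocallyCompactSpace X] [SigmaCompactSpace X] : ∃ χ : ℕ → C_c(X, ℝ), IsCutoffSequence χ := by
  let K : CompactExhaustion X := default
  have hχ : ∀ n, ∃ χ : C(X, ℝ), EqOn χ 1 (K n) ∧ EqOn χ 0 ∅ ∧ HasCompactSupport χ ∧
      ∀ x, χ x ∈ Icc 0 1 := fun n ↦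
    exists_continuous_one_zero_of_isCompact (K.isCompact n) isClosed_empty (disjoint_empty _)
  choose χ hχ_one _ hχ_supp hχ_mem using hχ
  refine ⟨fun n ↦ ⟨χ n, hχ_supp n⟩, hχ_mem, fun C hC ↦ ?_⟩
  obtain ⟨N, hN⟩ := K.exists_superset_of_isCompact hC
  filter_upwards [eventually_ge_atTop N] with n hn x hx
  exact hχ_one n (K.subset hn (hN hx))

theorem IsCutoffSequence.tendsto_smul {χ : ℕ → C_c(X, ℝ)} (hχ : IsCutoffSequence χ)
    (f : C(X, ℝ)) (x : X) : Tendsto (fun n ↦ (f • χ n) x) atTop (𝓝 (f x)) := by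
  refine tendsto_const_nhds.congr' ?_
  filter_upwards [hχ.eventually_eq_one {x} isCompact_singleton] with n hn
  simp [hn x rfl]

theorem IsCutoffSequence.abs_smul_le {χ : ℕ → C_c(X, ℝ)} (hχ : IsCutoffSequence χ)
    (f : C(X, ℝ)) (n : ℕ) (x : X) : |(f • χ n) x| ≤ |f x| := by
  rw [CompactlySupportedContinuousMap.smulc_apply, smul_eq_mul, abs_mul,
    abs_of_nonneg (hχ.mem_Icc n x).1]
  exact mul_le_of_le_one_right (abs_nonneg _) (hχ.mem_Icc n x).2

variable {T : C(X, ℝ)}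

theorem isBigO_top_of_hasCompactSupport (hT : ∀ x, 0 < T x) {f : X → ℝ} (hf : Continuous f)
    (hfc : HasCompactSupport f) : f =O[⊤] T := by
  have hdiv : HasCompactSupport (f * (T : X → ℝ)⁻¹) := hfc.mul_right
  obtain ⟨C, hC⟩ := hdiv.exists_bound_of_continuous
    (hf.mul (T.continuous.inv₀ fun x ↦ (hT x).ne'))
  refine isBigO_top.2 ⟨C, fun x ↦ ?_⟩
  have := hC x
  rwa [Pi.mul_apply, Pi.inv_apply, ← div_eq_mul_inv, norm_div,
    div_le_iff₀ (norm_pos_iff.2 (hT x).ne')] at this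

/-- The inclusion of `C_c(X, ℝ)` in the space of continuous functions dominated by a multiple of
the positive weight `T`. -/
def ofCompactlySupported (hT : ∀ x, 0 < T x) : C_c(X, ℝ) →ₗ[ℝ] weightedContinuous T where
  toFun g := ⟨g, isBigO_top_of_hasCompactSupport hT g.continuous g.hasCompactSupport⟩
  map_add' _ _ := rfl
  map_smul' _ _ := rfl

/-- The restriction to `C_c(X, ℝ)` of a positive functional on the weighted space. -/
def restrictCompactlySupported (hT : ∀ x, 0 < T x) (ℓ : weightedContinuous T →ₚ[ℝ] ℝ) :
    C_c(X, ℝ) →ₚ[ℝ] ℝ :=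
  PositiveLinearMap.mk₀ (ℓ.toLinearMap ∘ₗ ofCompactlySupported hT) fun _ hg ↦ map_nonneg ℓ hg

/-- Tightness of a functional on the weighted space: the weight is negligible off compact sets. -/
def IsTightFunctional (ℓ : weightedContinuous T →ₚ[ℝ] ℝ) : Prop :=
  ∀ ε > 0, ∃ K, IsCompact K ∧ ∃ e : weightedContinuous T,
    0 ≤ e ∧ (∀ x ∉ K, T x ≤ (e : C(X, ℝ)) x) ∧ ℓ e ≤ ε

theorem IsTightFunctional.tendsto_restrict_smul {ℓ : weightedContinuous T →ₚ[ℝ] ℝ}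
    (hℓ : IsTightFunctional ℓ) (hT : ∀ x, 0 < T x) {χ : ℕ → C_c(X, ℝ)} (hχ : IsCutoffSequence χ)
    (f : weightedContinuous T) :
    Tendsto (fun n ↦ restrictCompactlySupported hT ℓ ((f : C(X, ℝ)) • χ n)) atTop (𝓝 (ℓ f)) := by
  obtain ⟨C, hC, hfC⟩ := IsBigO.exists_pos f.2
  replace hfC : ∀ x, |(f : C(X, ℝ)) x| ≤ C * T x := fun x ↦ by
    simpa [abs_of_pos (hT x)] using isBigOWith_top.1 hfC x
  refine Metric.tendsto_nhds.2 fun ε hε ↦ ?_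
  obtain ⟨K, hK, e, he, hTe, hℓe⟩ := hℓ (ε / (2 * C)) (by positivity)
  filter_upwards [hχ.eventually_eq_one K hK] with n hn
  let g : weightedContinuous T := ofCompactlySupported hT ((f : C(X, ℝ)) • χ n)
  have hsub : ∀ x, |(f : C(X, ℝ)) x * χ n x - (f : C(X, ℝ)) x| ≤ C * (e : C(X, ℝ)) x := by
    intro x
    obtain ⟨hχ₀, hχ₁⟩ := hχ.mem_Icc n x
    by_cases hx : x ∈ K
    · simpa [hn x hx] using mul_nonneg hC.le (he x)
    calc |(f : C(X, ℝ)) x * χ n x - (f : C(X, ℝ)) x|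
      _ = |(f : C(X, ℝ)) x| * (1 - χ n x) := by
        rw [← mul_sub_one, abs_mul, abs_sub_comm, abs_of_nonneg (sub_nonneg.2 hχ₁)]
      _ ≤ |(f : C(X, ℝ)) x| := mul_le_of_le_one_right (abs_nonneg _) (sub_le_self _ hχ₀)
      _ ≤ C * (e : C(X, ℝ)) x := (hfC x).trans (mul_le_mul_of_nonneg_left (hTe x hx) hC.le)
  have hupper : ℓ (g - f) ≤ ℓ (C • e) := ℓ.monotone' fun x ↦ (le_abs_self _).trans (hsub x)
  have hlower : ℓ (f - g) ≤ ℓ (C • e) := ℓ.monotone' fun x ↦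
    (le_abs_self _).trans ((abs_sub_comm _ _).trans_le (hsub x))
  rw [map_sub, map_smul, smul_eq_mul] at hupper hlower
  have hbound : C * ℓ e ≤ ε / 2 := by
    calc C * ℓ e ≤ C * (ε / (2 * C)) := mul_le_mul_of_nonneg_left hℓe hC.le
      _ = ε / 2 := by field_simp
  change |ℓ g - ℓ f| < ε
  rw [abs_lt]
  constructor <;> linarith

variable [T2Space X] [LocallyCompactSpace X] [MeasurableSpace X] [BorelSpace X]

theorem integrable_rieszMeasure_weight (hT : ∀ x, 0 < T x) (ℓ : weightedContinuous T →ₚ[ℝ] ℝ)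
    {χ : ℕ → C_c(X, ℝ)} (hχ : IsCutoffSequence χ) :
    Integrable T (RealRMK.rieszMeasure (restrictCompactlySupported hT ℓ)) := by
  let μ := RealRMK.rieszMeasure (restrictCompactlySupported hT ℓ)
  let t : weightedContinuous T := ⟨T, isBigO_refl _ _⟩
  have hnonneg : ∀ n x, 0 ≤ (T • χ n) x := fun n x ↦
    mul_nonneg (hT x).le (hχ.mem_Icc n x).1
  have hle : ∀ n, ∫⁻ x, ENNReal.ofReal ((T • χ n) x) ∂μ ≤ ENNReal.ofReal (ℓ t) := fun n ↦ by
    rw [← ofReal_integral_eq_lintegral_ofReal (T • χ n).integrable (.of_forall (hnonneg n)),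
      RealRMK.integral_rieszMeasure]
    refine ENNReal.ofReal_le_ofReal (ℓ.monotone' fun x ↦ ?_)
    exact mul_le_of_le_one_right (hT x).le (hχ.mem_Icc n x).2
  have hlim : ∀ x, liminf (fun n ↦ ENNReal.ofReal ((T • χ n) x)) atTop = ENNReal.ofReal (T x) :=
    fun x ↦ ((ENNReal.continuous_ofReal.tendsto _).comp (hχ.tendsto_smul T x)).liminf_eq
  refine ⟨T.continuous.aestronglyMeasurable, ?_⟩
  rw [hasFiniteIntegral_iff_ofReal (.of_forall fun x ↦ (hT x).le)]
  calc ∫⁻ x, ENNReal.ofReal (T x) ∂μ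
    _ = ∫⁻ x, liminf (fun n ↦ ENNReal.ofReal ((T • χ n) x)) atTop ∂μ := by simp only [hlim]
    _ ≤ liminf (fun n ↦ ∫⁻ x, ENNReal.ofReal ((T • χ n) x) ∂μ) atTop :=
      lintegral_liminf_le fun n ↦ (T • χ n).continuous.measurable.ennreal_ofReal
    _ ≤ ENNReal.ofReal (ℓ t) := liminf_le_of_le (by isBoundedDefault) fun b hb ↦
      let ⟨n, hn⟩ := hb.exists
      hn.trans (hle n)
    _ < ⊤ := ENNReal.ofReal_lt_top

theorem IsTightFunctional.exists_measure [SigmaCompactSpace X] (hT : ∀ x, 0 < T x)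
    {ℓ : weightedContinuous T →ₚ[ℝ] ℝ} (hℓ : IsTightFunctional ℓ) :
    ∃ μ : Measure X, ∀ f : weightedContinuous T,
      Integrable (f : C(X, ℝ)) μ ∧ ∫ x, (f : C(X, ℝ)) x ∂μ = ℓ f := by
  obtain ⟨χ, hχ⟩ := exists_isCutoffSequence X
  let Λ := restrictCompactlySupported hT ℓ
  have hint : ∀ f : weightedContinuous T, Integrable (f : C(X, ℝ)) (RealRMK.rieszMeasure Λ) := by
    intro f
    obtain ⟨C, hC⟩ := isBigO_top.1 f.2
    exact ((integrable_rieszMeasure_weight hT ℓ hχ).norm.const_mul C).mono'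
      (f : C(X, ℝ)).continuous.aestronglyMeasurable (.of_forall hC)
  refine ⟨RealRMK.rieszMeasure Λ, fun f ↦ ⟨hint f, ?_⟩⟩
  refine tendsto_nhds_unique (tendsto_integral_of_dominated_convergence
    (F := fun n x ↦ ((f : C(X, ℝ)) • χ n) x) (fun x ↦ |(f : C(X, ℝ)) x|)
    (fun n ↦ ((f : C(X, ℝ)) • χ n).continuous.aestronglyMeasurable) (hint f).abs
    (fun n ↦ .of_forall (hχ.abs_smul_le _ n)) (.of_forall (hχ.tendsto_smul _))) ?_
  simpa only [RealRMK.integral_rieszMeasure] using hℓ.tendsto_restrict_smul hT hχ f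

theorem exists_measure_integral_le_of_convex [SigmaCompactSpace X] (hT : ∀ x, 0 < T x)
    {D : PointedCone ℝ (weightedContinuous T × ℝ)} (hneg : ∀ f ≤ 0, (f, 0) ∈ D)
    (hweight : ∃ p, (⟨T, isBigO_refl _ _⟩, p) ∈ D)
    (htight : ∀ ε > 0, ∃ K, IsCompact K ∧ ∃ e : weightedContinuous T,
      0 ≤ e ∧ (∀ x ∉ K, T x ≤ (e : C(X, ℝ)) x) ∧ (e, ε) ∈ D)
    {B : Set (weightedContinuous T)} (hB : Convex ℝ B) (hBne : B.Nonempty) {v : ℝ}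
    (hv : ∀ b ∈ B, ∀ p, (b, p) ∈ D → v ≤ p) :
    ∃ μ : Measure X, (∀ f : weightedContinuous T, Integrable (f : C(X, ℝ)) μ) ∧
      (∀ f p, (f, p) ∈ D → ∫ x, (f : C(X, ℝ)) x ∂μ ≤ p) ∧
      ∀ b ∈ B, v ≤ ∫ x, (b : C(X, ℝ)) x ∂μ := by
  have hdom : ∀ f, ∃ p, (f, p) ∈ D := by
    intro f
    obtain ⟨p, hp⟩ := hweight
    obtain ⟨C, hC, hfC⟩ := IsBigO.exists_nonneg f.2
    have hle : f - C • ⟨T, isBigO_refl _ _⟩ ≤ 0 := fun x ↦ by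
      have := (le_abs_self _).trans (isBigOWith_top.1 hfC x)
      rw [Real.norm_of_nonneg (hT x).le] at this
      exact sub_nonpos.2 this
    refine ⟨C * p, ?_⟩
    simpa using D.add_mem (hneg _ hle) (D.smul_mem hC hp)
  obtain ⟨ℓ, hℓD, hℓB⟩ := exists_linearMap_le_of_convex hdom hB hBne hv
  let ℓ' : weightedContinuous T →ₚ[ℝ] ℝ := PositiveLinearMap.mk₀ ℓ fun f hf ↦ by
    simpa using hℓD (-f) 0 (hneg _ (neg_nonpos.2 hf))
  have hℓ' : IsTightFunctional ℓ' := fun ε hε ↦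
    let ⟨K, hK, e, he, hTe, heD⟩ := htight ε hε
    ⟨K, hK, e, he, hTe, hℓD e ε heD⟩
  obtain ⟨μ, hμ⟩ := hℓ'.exists_measure hT
  exact ⟨μ, fun f ↦ (hμ f).1, fun f p hfp ↦ (hμ f).2.trans_le (hℓD f p hfp),
    fun b hb ↦ (hℓB b hb).trans_eq (hμ b).2.symm⟩

end WeightedRiesz

section UpperSemicontinuous

open scoped BoundedContinuousFunction

variable {X : Type*} [TopologicalSpace X]

theorem isLUB_ofReal_boundedContinuous [CompletelyRegularSpace X] {L : X → ℝ≥0∞}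
    (hL : LowerSemicontinuous L) :
    IsLUB {g | g ≤ L ∧ ∃ f : X →ᵇ ℝ, 0 ≤ f ∧ (fun x ↦ ENNReal.ofReal (f x)) = g} L := by
  refine ⟨fun g hg ↦ hg.1, fun M hM x ↦ ENNReal.le_of_forall_nnreal_lt fun a ha ↦ ?_⟩
  obtain ⟨φ, hφ, hφx, hφ_one⟩ := CompletelyRegularSpace.completely_regular x {y | ↑a < L y}ᶜ
    (hL.isOpen_preimage a).isClosed_compl (not_not.2 ha)
  let f : X →ᵇ ℝ :=
    (a : ℝ) • .ofNormedAddCommGroup (fun y ↦ 1 - (φ y : ℝ)) (by fun_prop) 1 fun y ↦ by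
      rw [Real.norm_of_nonneg (sub_nonneg.2 (φ y).2.2)]
      exact sub_le_self _ (φ y).2.1
  have hf : 0 ≤ f := fun y ↦ mul_nonneg a.2 (sub_nonneg.2 (φ y).2.2)
  have hfL : (fun y ↦ ENNReal.ofReal (f y)) ≤ L := by
    intro y
    by_cases hy : ↑a < L y
    · calc ENNReal.ofReal (f y) ≤ ENNReal.ofReal a :=
          ENNReal.ofReal_le_ofReal (mul_le_of_le_one_right a.2 (sub_le_self _ (φ y).2.1))
        _ ≤ L y := by simpa using hy.le
    · simp [f, hφ_one hy]
  simpa [f, hφx] using hM ⟨hfL, f, hf, rfl⟩ x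

theorem exists_monotone_iSup_ofReal_eq [CompletelyRegularSpace X] [HereditarilyLindelofSpace X]
    {L : X → ℝ≥0∞} (hL : LowerSemicontinuous L) :
    ∃ f : ℕ → X →ᵇ ℝ, Monotone f ∧ 0 ≤ f ∧ ∀ x, ⨆ n, ENNReal.ofReal (f n x) = L x := by
  obtain ⟨S, hS, hScount, hSlub⟩ := exists_countable_lowerSemicontinuous_isLUB
    (by
      rintro _ ⟨-, f, -, rfl⟩
      exact (ENNReal.continuous_ofReal.comp f.continuous).lowerSemicontinuous)
    (isLUB_ofReal_boundedContinuous hL)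
  obtain ⟨g, hg⟩ := (hScount.insert 0).exists_eq_range (insert_nonempty 0 S)
  have hgf : ∀ n, g n ≤ L ∧ ∃ f : X →ᵇ ℝ, 0 ≤ f ∧ (fun x ↦ ENNReal.ofReal (f x)) = g n := by
    intro n
    obtain hzero | hmem := hg.symm ▸ mem_range_self n
    · exact hzero ▸ ⟨fun _ ↦ bot_le, 0, le_rfl, funext fun _ ↦ ENNReal.ofReal_zero⟩
    · exact hS hmem
  choose hgL f hf hfg using hgf
  have hle : ∀ n, ∀ x, ENNReal.ofReal (partialSups f n x) ≤ L x := fun n ↦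
    (partialSups_iff_forall (fun h : X →ᵇ ℝ ↦ ∀ x, ENNReal.ofReal (h x) ≤ L x)
      (by simp [ENNReal.ofReal_max, forall_and])).2
      fun m _ x ↦ (congrFun (hfg m) x).trans_le (hgL m x)
  have hge : L ≤ fun x ↦ ⨆ n, ENNReal.ofReal (partialSups f n x) := by
    refine hSlub.2 fun h hh x ↦ ?_
    obtain ⟨n, rfl⟩ : h ∈ range g := hg ▸ mem_insert_of_mem 0 hh
    rw [← hfg n]
    exact le_iSup_of_le n (ENNReal.ofReal_le_ofReal (le_partialSups f n x))
  exact ⟨partialSups f, (partialSups f).monotone, fun n ↦ (hf n).trans (le_partialSups f n),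
    fun x ↦ le_antisymm (iSup_le fun n ↦ hle n x) (hge x)⟩

theorem lintegral_le_of_forall_boundedContinuous [CompletelyRegularSpace X]
    [HereditarilyLindelofSpace X] [MeasurableSpace X] [OpensMeasurableSpace X] {μ : Measure X}
    [IsFiniteMeasure μ] {L : X → ℝ≥0∞} (hL : LowerSemicontinuous L) {a : ℝ}
    (h : ∀ f : X →ᵇ ℝ, 0 ≤ f → (∀ x, ENNReal.ofReal (f x) ≤ L x) → ∫ x, f x ∂μ ≤ a) :
    ∫⁻ x, L x ∂μ ≤ ENNReal.ofReal a := by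
  obtain ⟨f, hf_mono, hf_nonneg, hfL⟩ := exists_monotone_iSup_ofReal_eq hL
  have hle : ∀ k x, ENNReal.ofReal (f k x) ≤ L x := fun k x ↦
    hfL x ▸ le_iSup (fun k ↦ ENNReal.ofReal (f k x)) k
  simp only [← hfL]
  rw [lintegral_iSup (fun k ↦ (f k).continuous.measurable.ennreal_ofReal) fun k l hkl x ↦
    ENNReal.ofReal_le_ofReal (hf_mono hkl x)]
  refine iSup_le fun k ↦ ?_
  rw [← ofReal_integral_eq_lintegral_ofReal ((f k).integrable μ) (.of_forall (hf_nonneg k))]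
  exact ENNReal.ofReal_le_ofReal (h (f k) (hf_nonneg k) (hle k))

theorem upperSemicontinuous_piecewise_bot {P : Set X} (hP : IsClosed P) {G : X → EReal}
    (hG : UpperSemicontinuousOn G P) : UpperSemicontinuous (P.piecewise G ⊥) := by
  intro x y hy
  by_cases hx : x ∈ P
  · rw [piecewise_eq_of_mem _ _ _ hx] at hy
    filter_upwards [eventually_nhdsWithin_iff.1 (hG x hx y hy)] with z hz
    by_cases hzP : z ∈ P
    · simpa [hzP] using hz hzP
    · simpa [hzP] using bot_le.trans_lt hy
  · filter_upwards [hP.isOpen_compl.mem_nhds hx] with z hz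
    simpa [notMem_of_mem_compl hz] using bot_le.trans_lt hy

theorem lowerSemicontinuous_toENNReal_coe_sub {w : X → ℝ} (hw : Continuous w) {G : X → EReal}
    (hG : UpperSemicontinuous G) :
    LowerSemicontinuous fun x ↦ ((w x : EReal) - G x).toENNReal := by
  refine EReal.continuous_toENNReal.comp_lowerSemicontinuous ?_ fun _ _ h ↦
    EReal.toENNReal_le_toENNReal h
  simp only [sub_eq_add_neg]
  exact (continuous_coe_real_ereal.comp hw).lowerSemicontinuous.add'
    (continuous_neg.comp_upperSemicontinuous_antitone hG EReal.neg_strictAnti.antitone) fun x ↦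
    EReal.continuousAt_add (.inl (EReal.coe_ne_top _)) (.inl (EReal.coe_ne_bot _))

end UpperSemicontinuous

section Expectation

open scoped BoundedContinuousFunction

variable {n : ℕ} {Q : Measure (Path n)}

theorem eexp_eq_integral {f : Path n → ℝ} (hf : Integrable f Q) :
    eexp Q f = ((∫ ω, f ω ∂Q : ℝ) : EReal) := by
  have hneg : ∫⁻ ω, ENNReal.ofReal (-f ω) ∂Q ≠ ⊤ := hf.neg.lintegral_lt_top.ne
  rw [integral_eq_lintegral_pos_part_sub_lintegral_neg_part hf, EReal.coe_sub, eexp,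
    EReal.coe_ennreal_toReal hf.lintegral_lt_top.ne, EReal.coe_ennreal_toReal hneg]

theorem eexpE_coe (f : Path n → ℝ) : eexpE Q (fun ω ↦ (f ω : EReal)) = eexp Q f := by
  simp [eexpE, eexp, posE, ← EReal.coe_neg]

theorem eexpE_mono_ae {f g : Path n → EReal} (h : f ≤ᵐ[Q] g) : eexpE Q f ≤ eexpE Q g := by
  refine EReal.sub_le_sub (EReal.coe_ennreal_le_coe_ennreal_iff.2 ?_)
    (EReal.coe_ennreal_le_coe_ennreal_iff.2 ?_) <;> refine lintegral_mono_ae ?_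
  · filter_upwards [h] with ω hω using EReal.toENNReal_le_toENNReal hω
  · filter_upwards [h] with ω hω using EReal.toENNReal_le_toENNReal (EReal.neg_le_neg_iff.2 hω)

theorem coe_sub_toReal_toENNReal_le {w : ℝ} {x : EReal} (hx : x ≤ w)
    (hlt : ((w : EReal) - x).toENNReal ≠ ⊤) :
    ((w - ((w : EReal) - x).toENNReal.toReal : ℝ) : EReal) ≤ x := by
  induction x with
  | bot => simp at hlt
  | top => exact le_top
  | coe x =>
    rw [← EReal.coe_sub, EReal.real_coe_toENNReal, ENNReal.toReal_ofReal] <;> simp_all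

theorem le_coe_sub_of_ofReal_le {w t : ℝ} {x : EReal} (hx : x ≤ w)
    (ht : ENNReal.ofReal t ≤ ((w : EReal) - x).toENNReal) : x ≤ ((w - t : ℝ) : EReal) := by
  induction x with
  | bot => exact bot_le
  | top => simp at hx
  | coe x =>
    rw [EReal.coe_le_coe_iff] at hx ⊢
    rw [← EReal.coe_sub, EReal.real_coe_toENNReal,
      ENNReal.ofReal_le_ofReal_iff (sub_nonneg.2 hx)] at ht
    exact le_sub_comm.1 ht

theorem le_eexpE_of_forall_le_integral_sub [IsFiniteMeasure Q] {w : Path n → ℝ} (hw : Continuous w)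
    (hwQ : Integrable w Q) {G : Path n → EReal} (hG : UpperSemicontinuous G)
    (hGw : ∀ ω, G ω ≤ w ω) {v : ℝ}
    (hv : ∀ f : Path n →ᵇ ℝ, 0 ≤ f → (∀ ω, G ω ≤ ((w ω - f ω : ℝ) : EReal)) →
      v ≤ ∫ ω, (w ω - f ω) ∂Q) :
    (v : EReal) ≤ eexpE Q G := by
  let L : Path n → ℝ≥0∞ := fun ω ↦ ((w ω : EReal) - G ω).toENNReal
  have hL : LowerSemicontinuous L := lowerSemicontinuous_toENNReal_coe_sub hw hG
  have hv₀ : v ≤ ∫ ω, w ω ∂Q := by simpa using hv 0 le_rfl (by simpa using hGw)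
  have hL_le : ∫⁻ ω, L ω ∂Q ≤ ENNReal.ofReal (∫ ω, w ω ∂Q - v) := by
    refine lintegral_le_of_forall_boundedContinuous hL fun f hf hfL ↦ ?_
    have := hv f hf fun ω ↦ le_coe_sub_of_ofReal_le (hGw ω) (hfL ω)
    rw [integral_sub hwQ (f.integrable Q)] at this
    linarith
  have hL_ne_top : ∫⁻ ω, L ω ∂Q ≠ ⊤ := hL_le.trans_lt ENNReal.ofReal_lt_top |>.ne
  have hL_int : Integrable (fun ω ↦ (L ω).toReal) Q :=
    integrable_toReal_of_lintegral_ne_top hL.measurable.aemeasurable hL_ne_top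
  have hL_integral : ∫ ω, (L ω).toReal ∂Q ≤ ∫ ω, w ω ∂Q - v := by
    rw [integral_toReal hL.measurable.aemeasurable (ae_lt_top hL.measurable hL_ne_top)]
    exact ENNReal.toReal_le_of_le_ofReal (sub_nonneg.2 hv₀) hL_le
  calc (v : EReal) ≤ ((∫ ω, (w ω - (L ω).toReal) ∂Q : ℝ) : EReal) := by
        rw [integral_sub hwQ hL_int]
        exact_mod_cast le_sub_comm.1 hL_integral
    _ = eexpE Q fun ω ↦ ((w ω - (L ω).toReal : ℝ) : EReal) := by
        rw [eexpE_coe]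
        exact (eexp_eq_integral (hwQ.sub hL_int)).symm
    _ ≤ eexpE Q G := eexpE_mono_ae <| by
        filter_upwards [ae_lt_top hL.measurable hL_ne_top] with ω hω
        exact coe_sub_toReal_toENNReal_le (hGw ω) hω.ne

end Expectation

section BoundedTest

open scoped BoundedContinuousFunction

variable {Ω α : Type*} {mΩ : MeasurableSpace Ω} [MeasurableSpace α] {μ : Measure Ω} {Y : Ω → α}
  {Z : Ω → ℝ}

theorem integral_map_withDensity_enorm (hY : Measurable Y) (hZ : AEStronglyMeasurable Z μ)
    {u : α → ℝ} (hu : Measurable u) :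
    ∫ x, u x ∂((μ.withDensity fun ω ↦ ‖Z ω‖ₑ).map Y) = ∫ ω, u (Y ω) * |Z ω| ∂μ := by
  rw [integral_map hY.aemeasurable hu.aestronglyMeasurable,
    integral_withDensity_eq_integral_toReal_smul₀ hZ.enorm (by simp)]
  simp [mul_comm]

variable [TopologicalSpace α] [TopologicalSpace.PseudoMetrizableSpace α] [BorelSpace α]

-- The bounded continuous functions are dense in `L¹` of the image of `|Z| μ` under `Y`.
theorem integral_comp_mul_nonpos_of_boundedContinuous (hY : Measurable Y) (hZ : Integrable Z μ)
    (h : ∀ g : α →ᵇ ℝ, 0 ≤ g → ∫ ω, g (Y ω) * Z ω ∂μ ≤ 0) {f : α → ℝ} (hf : Measurable f)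
    (hf_nonneg : ∀ x, 0 ≤ f x) {C : ℝ} (hfC : ∀ x, |f x| ≤ C) : ∫ ω, f (Y ω) * Z ω ∂μ ≤ 0 := by
  let ν := (μ.withDensity fun ω ↦ ‖Z ω‖ₑ).map Y
  have : IsFiniteMeasure (μ.withDensity fun ω ↦ ‖Z ω‖ₑ) := isFiniteMeasure_withDensity hZ.2.ne
  have hfν : Integrable f ν := .of_bound hf.aestronglyMeasurable C (.of_forall hfC)
  refine le_of_forall_pos_le_add fun ε hε ↦ ?_
  obtain ⟨g, hg, hgν⟩ := hfν.exists_boundedContinuous_integral_sub_le hε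
  have hg_meas : Measurable (g ⊔ 0) := (g ⊔ 0).continuous.measurable
  have hclose : ∀ x, |f x - (g ⊔ 0) x| ≤ |f x - g x| := fun x ↦ by
    simpa [hf_nonneg x] using abs_max_sub_max_le_abs (f x) (g x) 0
  have hfZ : Integrable (fun ω ↦ f (Y ω) * Z ω) μ :=
    hZ.bdd_mul (hf.comp hY).aestronglyMeasurable (.of_forall fun ω ↦ hfC (Y ω))
  have hgZ : Integrable (fun ω ↦ (g ⊔ 0) (Y ω) * Z ω) μ :=
    hZ.bdd_mul (hg_meas.comp hY).aestronglyMeasurable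
      (.of_forall fun ω ↦ (g ⊔ 0).norm_coe_le_norm (Y ω))
  have hdiff : ∫ ω, (f (Y ω) - (g ⊔ 0) (Y ω)) * Z ω ∂μ ≤ ε :=
    calc ∫ ω, (f (Y ω) - (g ⊔ 0) (Y ω)) * Z ω ∂μ
      _ ≤ ∫ ω, |f (Y ω) - (g ⊔ 0) (Y ω)| * |Z ω| ∂μ := by
        simp only [← abs_mul]
        exact (le_abs_self _).trans abs_integral_le_integral_abs
      _ = ∫ x, |f x - (g ⊔ 0) x| ∂ν :=
        (integral_map_withDensity_enorm hY hZ.1 (hf.sub hg_meas).abs).symm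
      _ ≤ ∫ x, |f x - g x| ∂ν := integral_mono_of_nonneg (.of_forall fun x ↦ abs_nonneg _)
        (hfν.sub hgν).abs (.of_forall hclose)
      _ ≤ ε := hg
  simp only [sub_mul] at hdiff
  rw [integral_sub hfZ hgZ] at hdiff
  linarith [h (g ⊔ 0) le_sup_right]

end BoundedTest

section Strategies

open scoped BoundedContinuousFunction

variable {n : ℕ}

instance : Add (Static n) where
  add X Y :=
    { const := X.const + Y.const
      m := X.m + Y.m
      coeff := Fin.append X.coeff Y.coeff
      idx := Fin.append X.idx Y.idx
      strike := Fin.append X.strike Y.strike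
      strike_nonneg := Fin.addCases (by simpa using X.strike_nonneg)
        (by simpa using Y.strike_nonneg) }

instance : SMul ℝ (Static n) where
  smul r X := { X with const := r * X.const, coeff := fun k ↦ r * X.coeff k }

theorem Static.callPayoff_add (X Y : Static n) (ω : Path n) :
    (X + Y).callPayoff ω = X.callPayoff ω + Y.callPayoff ω := by
  change X.const + Y.const + ∑ k : Fin (X.m + Y.m), Fin.append X.coeff Y.coeff k *
    max (ω (Fin.append X.idx Y.idx k).succ - Fin.append X.strike Y.strike k) 0 = _
  simp only [Fin.sum_univ_add, Fin.append_left, Fin.append_right, callPayoff]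
  ring

theorem Static.price_add (X Y : Static n) (c : Fin n → ℝ → ℝ) :
    (X + Y).price c = X.price c + Y.price c := by
  change X.const + Y.const + ∑ k : Fin (X.m + Y.m), Fin.append X.coeff Y.coeff k *
    c (Fin.append X.idx Y.idx k) (Fin.append X.strike Y.strike k) = _
  simp only [Fin.sum_univ_add, Fin.append_left, Fin.append_right, price]
  ring

theorem Static.callPayoff_smul (r : ℝ) (X : Static n) (ω : Path n) :
    (r • X).callPayoff ω = r * X.callPayoff ω := by
  simp only [callPayoff, HSMul.hSMul, SMul.smul, mul_add, Finset.mul_sum, mul_assoc]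

theorem Static.price_smul (r : ℝ) (X : Static n) (c : Fin n → ℝ → ℝ) :
    (r • X).price c = r * X.price c := by
  simp only [price, HSMul.hSMul, SMul.smul, mul_add, Finset.mul_sum, mul_assoc]

/-- The portfolio of `b` units of cash and `a i` calls of maturity `i`, all struck at `K`. -/
def Static.callsAt {K : ℝ} (hK : 0 ≤ K) (b : ℝ) (a : Fin n → ℝ) : Static n where
  const := b
  m := n
  coeff := a
  idx := id
  strike _ := K
  strike_nonneg _ := hK

theorem Static.callPayoff_callsAt {K : ℝ} (hK : 0 ≤ K) (b : ℝ) (a : Fin n → ℝ) (ω : Path n) :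
    (callsAt hK b a).callPayoff ω = b + ∑ i, a i * max (ω i.succ - K) 0 :=
  rfl

theorem Static.price_callsAt {K : ℝ} (hK : 0 ≤ K) (b : ℝ) (a : Fin n → ℝ) (c : Fin n → ℝ → ℝ) :
    (callsAt hK b a).price c = b + ∑ i, a i * c i K :=
  rfl

instance : Zero (Dyn n) where
  zero := ⟨0, fun _ ↦ measurable_const, fun _ ↦ ⟨0, fun _ ↦ by simp⟩⟩

instance : Add (Dyn n) where
  add D E :=
    { pos := D.pos + E.pos
      meas j := (D.meas j).add (E.meas j)
      bdd j :=
        let ⟨C, hC⟩ := D.bdd j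
        let ⟨C', hC'⟩ := E.bdd j
        ⟨C + C', fun x ↦ (abs_add_le _ _).trans (add_le_add (hC x) (hC' x))⟩ }

instance : SMul ℝ (Dyn n) where
  smul r D :=
    { pos := r • D.pos
      meas j := (D.meas j).const_smul r
      bdd j :=
        let ⟨C, hC⟩ := D.bdd j
        ⟨|r| * C, fun x ↦ (abs_mul _ _).trans_le <|
          mul_le_mul_of_nonneg_left (hC x) (abs_nonneg r)⟩ }

theorem Dyn.nonneg_zero : (0 : Dyn n).Nonneg := fun _ _ ↦ le_rfl

theorem Dyn.Nonneg.add {D E : Dyn n} (hD : D.Nonneg) (hE : E.Nonneg) : (D + E).Nonneg :=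
  fun j x ↦ add_nonneg (hD j x) (hE j x)

theorem Dyn.Nonneg.smul {D : Dyn n} (hD : D.Nonneg) {r : ℝ} (hr : 0 ≤ r) : (r • D).Nonneg :=
  fun j x ↦ mul_nonneg hr (hD j x)

theorem Dyn.gains_zero (ω : Path n) : (0 : Dyn n).gains ω = 0 :=
  Finset.sum_eq_zero fun _ _ ↦ zero_mul _

theorem Dyn.gains_add (D E : Dyn n) (ω : Path n) : (D + E).gains ω = D.gains ω + E.gains ω := by
  simp only [gains, ← Finset.sum_add_distrib, ← add_mul]
  rfl

theorem Dyn.gains_smul (r : ℝ) (D : Dyn n) (ω : Path n) : (r • D).gains ω = r * D.gains ω := by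
  simp only [gains, Finset.mul_sum, ← mul_assoc]
  rfl

/-- The strategy holding `g(S₁, …, S_j)` units of the asset over the `j`-th period only. -/
def Dyn.single (j : Fin n) (g : (Fin j → ℝ) →ᵇ ℝ) : Dyn n where
  pos := Pi.single j g
  meas i := by
    obtain rfl | hij := eq_or_ne i j
    · simpa using g.continuous.measurable
    · simpa [hij] using measurable_zero
  bdd i := by
    obtain rfl | hij := eq_or_ne i j
    · simpa using ⟨‖g‖, g.norm_coe_le_norm⟩
    · simpa [hij] using ⟨0, le_rfl⟩

theorem Dyn.nonneg_single {j : Fin n} {g : (Fin j → ℝ) →ᵇ ℝ} (hg : 0 ≤ g) :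
    (single j g).Nonneg := by
  intro i x
  obtain rfl | hij := eq_or_ne i j
  · simpa [single] using hg x
  · simp [single, hij]

theorem Dyn.gains_single (j : Fin n) (g : (Fin j → ℝ) →ᵇ ℝ) (ω : Path n) :
    (single j g).gains ω = g (restr j ω) * (ω j.succ - ω j.castSucc) := by
  rw [gains, Finset.sum_eq_single_of_mem j (Finset.mem_univ j) fun i _ hij ↦ by simp [single, hij]]
  simp [single]

end Strategies

section Superhedging

variable {n : ℕ} {c : Fin n → ℝ → ℝ} {P : Set (Path n)}

/-- The pairs `(f, p)` such that some semi-static strategy of price `p` superhedges `f` on `P`. -/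
def superhedging (c : Fin n → ℝ → ℝ) (P : Set (Path n)) : PointedCone ℝ ((Path n → ℝ) × ℝ) where
  carrier := {y | ∃ (X : Static n) (D : Dyn n), D.Nonneg ∧ X.price c = y.2 ∧
    ∀ ω ∈ P, y.1 ω ≤ X.callPayoff ω + D.gains ω}
  zero_mem' := by
    refine ⟨.callsAt le_rfl 0 0, 0, Dyn.nonneg_zero, ?_, fun ω _ ↦ ?_⟩
    · simp [Static.price_callsAt]
    · simp [Static.callPayoff_callsAt, Dyn.gains_zero]
  add_mem' := by
    rintro y z ⟨X, D, hD, hXy, hy⟩ ⟨Y, E, hE, hYz, hz⟩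
    refine ⟨X + Y, D + E, hD.add hE, ?_, fun ω hω ↦ ?_⟩
    · rw [X.price_add, hXy, hYz, Prod.snd_add]
    · rw [X.callPayoff_add, D.gains_add, add_add_add_comm]
      exact add_le_add (hy ω hω) (hz ω hω)
  smul_mem' := by
    rintro ⟨r, hr⟩ y ⟨X, D, hD, hXy, hy⟩
    refine ⟨r • X, r • D, hD.smul hr, ?_, fun ω hω ↦ ?_⟩
    · rw [X.price_smul, hXy]
      rfl
    · rw [X.callPayoff_smul, D.gains_smul, ← mul_add]
      exact mul_le_mul_of_nonneg_left (hy ω hω) hr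

theorem static_mem_superhedging (X : Static n) : (X.callPayoff, X.price c) ∈ superhedging c P :=
  ⟨X, 0, Dyn.nonneg_zero, rfl, fun ω _ ↦ by simp [Dyn.gains_zero]⟩

theorem calls_mem_superhedging {K : ℝ} (hK : 0 ≤ K) (b : ℝ) (a : Fin n → ℝ) :
    (fun ω ↦ b + ∑ i, a i * max (ω i.succ - K) 0, b + ∑ i, a i * c i K) ∈ superhedging c P :=
  static_mem_superhedging (.callsAt hK b a)

theorem cash_mem_superhedging (a : ℝ) : (fun _ ↦ a, a) ∈ superhedging c P := by
  simpa using calls_mem_superhedging (c := c) (P := P) le_rfl a 0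

theorem gains_mem_superhedging {D : Dyn n} (hD : D.Nonneg) : (D.gains, 0) ∈ superhedging c P :=
  ⟨.callsAt le_rfl 0 0, D, hD, by simp [Static.price_callsAt],
    fun ω _ ↦ by simp [Static.callPayoff_callsAt]⟩

theorem superhedging_mono {f g : Path n → ℝ} {p q : ℝ} (hg : (g, p) ∈ superhedging c P)
    (hfg : ∀ ω ∈ P, f ω ≤ g ω) (hpq : p ≤ q) : (f, q) ∈ superhedging c P := by
  obtain ⟨X, D, hD, hp, hX⟩ := (superhedging c P).add_mem hg (cash_mem_superhedging (q - p))
  refine ⟨X, D, hD, by simpa using hp, fun ω hω ↦ (hfg ω hω).trans ?_⟩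
  have : g ω + (q - p) ≤ _ := hX ω hω
  linarith

theorem linear_mem_superhedging {s₀ : ℝ} (hP : P ⊆ Omega n s₀) (c : Fin n → ℝ → ℝ) (K : ℝ) :
    (fun ω ↦ K * (1 + ∑ i : Fin n, ω i.succ), K * (1 + ∑ i, c i 0)) ∈ superhedging c P := by
  refine superhedging_mono (calls_mem_superhedging le_rfl K fun _ ↦ K) (fun ω hω ↦ ?_) ?_
  · simp [(hP hω).2, mul_add, Finset.mul_sum]
  · simp [mul_add, Finset.mul_sum]

theorem V_le_of_mem_superhedging {G : Path n → EReal} {f : Path n → ℝ} {p : ℝ}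
    (hf : (f, p) ∈ superhedging c P) (hGf : ∀ ω ∈ P, G ω ≤ f ω) :
    V Static.callPayoff c P G ≤ p :=
  let ⟨X, D, hD, hp, hX⟩ := hf
  sInf_le ⟨X, D, hD, congrArg _ hp.symm, fun ω hω ↦
    (hGf ω hω).trans (EReal.coe_le_coe_iff.2 (hX ω hω))⟩

end Superhedging

section LinearGrowth

open Asymptotics
open scoped BoundedContinuousFunction

variable {n : ℕ}

/-- The weight `1 + ‖ω‖` on path space: linear growth of `f` is `f =O[⊤] pathWeight n`, where the
filter `⊤` makes the bound hold at every path. -/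
def pathWeight (n : ℕ) : C(Path n, ℝ) where
  toFun ω := 1 + ‖ω‖

theorem pathWeight_pos (ω : Path n) : 0 < pathWeight n ω :=
  add_pos_of_pos_of_nonneg one_pos (norm_nonneg ω)

theorem isBigO_pathWeight_of_abs_le {f : Path n → ℝ} {C : ℝ}
    (hf : ∀ ω, |f ω| ≤ C * (1 + ‖ω‖)) : f =O[⊤] pathWeight n :=
  isBigO_top.2 ⟨C, fun ω ↦ by
    rw [Real.norm_of_nonneg (pathWeight_pos ω).le]
    exact hf ω⟩

theorem isBigO_pathWeight_norm : (fun ω : Path n ↦ ‖ω‖) =O[⊤] pathWeight n :=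
  isBigO_pathWeight_of_abs_le (C := 1) fun ω ↦ by
    rw [abs_norm, one_mul]
    exact le_add_of_nonneg_left zero_le_one

theorem isBigO_pathWeight_of_bounded {f : Path n → ℝ} {C : ℝ} (hf : ∀ ω, |f ω| ≤ C) :
    f =O[⊤] pathWeight n :=
  isBigO_pathWeight_of_abs_le fun ω ↦ (hf ω).trans <|
    le_mul_of_one_le_right ((abs_nonneg _).trans (hf ω)) (le_add_of_nonneg_right (norm_nonneg ω))

theorem isBigO_pathWeight_apply (i : Fin (n + 1)) : (fun ω : Path n ↦ ω i) =O[⊤] pathWeight n :=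
  (IsBigO.of_bound 1 (.of_forall fun ω ↦ by
    simpa using norm_le_pi_norm ω i)).trans isBigO_pathWeight_norm

theorem isBigO_pathWeight_const (a : ℝ) : (fun _ : Path n ↦ a) =O[⊤] pathWeight n :=
  isBigO_pathWeight_of_bounded fun _ ↦ le_rfl

theorem isBigO_pathWeight_linear (K : ℝ) :
    (fun ω : Path n ↦ K * (1 + ∑ i : Fin n, ω i.succ)) =O[⊤] pathWeight n :=
  .const_mul_left ((isBigO_pathWeight_const 1).add <| .fun_sum fun i _ ↦
    isBigO_pathWeight_apply i.succ) K

theorem isBigO_pathWeight_posPart {f : Path n → ℝ} (hf : f =O[⊤] pathWeight n) :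
    (fun ω ↦ max (f ω) 0) =O[⊤] pathWeight n := by
  refine (IsBigO.of_bound 1 (.of_forall fun ω ↦ ?_)).trans hf
  simpa using abs_max_sub_max_le_abs (f ω) 0 0

theorem Static.continuous_callPayoff (X : Static n) : Continuous X.callPayoff := by
  unfold callPayoff
  fun_prop

theorem Static.isBigO_callPayoff (X : Static n) : X.callPayoff =O[⊤] pathWeight n :=
  (isBigO_pathWeight_const _).add <| .fun_sum fun _ _ ↦ .const_mul_left
    (isBigO_pathWeight_posPart ((isBigO_pathWeight_apply _).sub (isBigO_pathWeight_const _))) _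

theorem continuous_restr (j : Fin n) : Continuous (restr j : Path n → Fin j → ℝ) := by
  unfold restr
  fun_prop

theorem Dyn.continuous_gains_single (j : Fin n) (g : (Fin j → ℝ) →ᵇ ℝ) :
    Continuous (single j g).gains := by
  simp only [funext (gains_single j g)]
  have := continuous_restr j
  fun_prop

theorem Dyn.isBigO_gains_single (j : Fin n) (g : (Fin j → ℝ) →ᵇ ℝ) :
    (single j g).gains =O[⊤] pathWeight n := by
  simp only [funext (gains_single j g)]
  refine IsBigO.trans (.of_bound ‖g‖ (.of_forall fun ω ↦ ?_))
    ((isBigO_pathWeight_apply j.succ).sub (isBigO_pathWeight_apply j.castSucc))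
  rw [norm_mul]
  exact mul_le_mul_of_nonneg_right (g.norm_coe_le_norm _) (norm_nonneg _)

theorem norm_le_add_sum_call {s₀ K : ℝ} {ω : Path n} (hω : ω ∈ Omega n s₀) (hK : s₀ ≤ K) :
    ‖ω‖ ≤ K + ∑ i : Fin n, max (ω i.succ - K) 0 := by
  obtain ⟨rfl, hω⟩ := hω
  have hsum : 0 ≤ ∑ i : Fin n, max (ω i.succ - K) 0 :=
    Finset.sum_nonneg fun i _ ↦ le_max_right _ _
  refine (pi_norm_le_iff_of_nonneg (add_nonneg ((hω 0).trans hK) hsum)).2 fun i ↦ ?_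
  rw [Real.norm_of_nonneg (hω i)]
  induction i using Fin.cases with
  | zero => linarith
  | succ i =>
    calc ω i.succ = K + (ω i.succ - K) := by ring
      _ ≤ K + max (ω i.succ - K) 0 := by gcongr; exact le_max_left _ _
      _ ≤ K + ∑ i : Fin n, max (ω i.succ - K) 0 := by
        gcongr
        exact Finset.single_le_sum (f := fun i : Fin n ↦ max (ω i.succ - K) 0)
          (fun i _ ↦ le_max_right _ _) (Finset.mem_univ i)

end LinearGrowth

section PricingMeasure

open Asymptotics
open scoped BoundedContinuousFunction

variable {n : ℕ} {c : Fin n → ℝ → ℝ} {P : Set (Path n)} {Q : Measure (Path n)}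

/-- A measure integrating all functions of linear growth, under which the continuous ones cost at
most as much as any strategy superhedging them. -/
structure IsPricingMeasure (c : Fin n → ℝ → ℝ) (P : Set (Path n)) (Q : Measure (Path n)) :
    Prop where
  integrable : ∀ f : Path n → ℝ, Continuous f → f =O[⊤] pathWeight n → Integrable f Q
  integral_le : ∀ f : Path n → ℝ, Continuous f → f =O[⊤] pathWeight n →
    ∀ p, (f, p) ∈ superhedging c P → ∫ ω, f ω ∂Q ≤ p

theorem IsPricingMeasure.isProbabilityMeasure (hQ : IsPricingMeasure c P Q) :
    IsProbabilityMeasure Q := by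
  have hle (a : ℝ) : Q.real univ * a ≤ a := by
    simpa using hQ.integral_le _ continuous_const (isBigO_pathWeight_const a) a
      (cash_mem_superhedging a)
  have hone : Q.real univ = 1 := by linarith [hle 1, hle (-1)]
  exact isProbabilityMeasure_iff_real.2 hone

theorem IsPricingMeasure.nonempty (hQ : IsPricingMeasure c P Q) : P.Nonempty := by
  by_contra! hP
  have := hQ.isProbabilityMeasure
  have hle := hQ.integral_le (fun _ ↦ 1) continuous_const (isBigO_pathWeight_const 1) 0
    (superhedging_mono (cash_mem_superhedging 0) (by simp [hP]) le_rfl)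
  norm_num at hle

theorem IsPricingMeasure.measure_eq_one (hQ : IsPricingMeasure c P Q) (hP : IsClosed P) :
    Q P = 1 := by
  have := hQ.isProbabilityMeasure
  have hne : P.Nonempty := hQ.nonempty
  let d : Path n → ℝ := fun ω ↦ min (Metric.infDist ω P) 1
  have hd : Continuous d := (Metric.continuous_infDist_pt P).min continuous_const
  have hd_nonneg : 0 ≤ d := fun ω ↦ le_min Metric.infDist_nonneg zero_le_one
  have hdO : d =O[⊤] pathWeight n := isBigO_pathWeight_of_bounded fun ω ↦
    (abs_of_nonneg (hd_nonneg ω)).trans_le (min_le_right _ _)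
  have hd_hedge : (d, 0) ∈ superhedging c P :=
    superhedging_mono (cash_mem_superhedging 0)
      (fun ω hω ↦ by simp [d, Metric.infDist_zero_of_mem hω]) le_rfl
  have hd_ae : d =ᵐ[Q] 0 :=
    (integral_eq_zero_iff_of_nonneg hd_nonneg (hQ.integrable d hd hdO)).1 <|
      (hQ.integral_le d hd hdO 0 hd_hedge).antisymm (integral_nonneg hd_nonneg)
  refine (mem_ae_iff_prob_eq_one hP.measurableSet).1 ?_
  filter_upwards [hd_ae] with ω hω
  have hω' : Metric.infDist ω P = 0 ∧ Metric.infDist ω P ≤ 1 := by simpa [d, min_eq_iff] using hω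
  exact (hP.mem_iff_infDist_zero hne).2 hω'.1

theorem IsPricingMeasure.integrable_increment (hQ : IsPricingMeasure c P Q) (j : Fin n) :
    Integrable (fun ω : Path n ↦ ω j.succ - ω j.castSucc) Q :=
  hQ.integrable _ (by fun_prop) ((isBigO_pathWeight_apply _).sub (isBigO_pathWeight_apply _))

theorem IsPricingMeasure.integrable_period_gains (hQ : IsPricingMeasure c P Q) (D : Dyn n)
    (j : Fin n) : Integrable (fun ω ↦ D.pos j (restr j ω) * (ω j.succ - ω j.castSucc)) Q := by
  obtain ⟨C, hC⟩ := D.bdd j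
  exact (hQ.integrable_increment j).bdd_mul
    ((D.meas j).comp (continuous_restr j).measurable).aestronglyMeasurable
    (.of_forall fun ω ↦ hC (restr j ω))

theorem IsPricingMeasure.integral_gains_nonpos (hQ : IsPricingMeasure c P Q) {D : Dyn n}
    (hD : D.Nonneg) : ∫ ω, D.gains ω ∂Q ≤ 0 := by
  unfold Dyn.gains
  rw [integral_finsetSum _ fun j _ ↦ hQ.integrable_period_gains D j]
  refine Finset.sum_nonpos fun j _ ↦ ?_
  obtain ⟨C, hC⟩ := D.bdd j
  refine integral_comp_mul_nonpos_of_boundedContinuous (continuous_restr j).measurable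
    (hQ.integrable_increment j) (fun g hg ↦ ?_) (D.meas j) (hD j) hC
  simpa only [Dyn.gains_single] using hQ.integral_le _ (Dyn.continuous_gains_single j g)
    (Dyn.isBigO_gains_single j g) 0 (gains_mem_superhedging (Dyn.nonneg_single hg))

theorem IsPricingMeasure.calibrated (hQ : IsPricingMeasure c P Q) (hP : IsClosed P) :
    Calibrated Static.callPayoff c P Q := by
  refine ⟨hQ.isProbabilityMeasure, hQ.measure_eq_one hP, fun X D hD ↦ ?_⟩
  have hX := hQ.integrable _ X.continuous_callPayoff X.isBigO_callPayoff
  have hD_int : Integrable D.gains Q :=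
    integrable_finsetSum _ fun j _ ↦ hQ.integrable_period_gains D j
  have hD_nonpos := hQ.integral_gains_nonpos hD
  have hX_le : ∫ ω, X.callPayoff ω ∂Q ≤ X.price c :=
    hQ.integral_le _ X.continuous_callPayoff X.isBigO_callPayoff _ (static_mem_superhedging X)
  calc eexp Q (fun ω ↦ X.callPayoff ω + D.gains ω)
    _ = ((∫ ω, (X.callPayoff ω + D.gains ω) ∂Q : ℝ) : EReal) := eexp_eq_integral (hX.add hD_int)
    _ ≤ X.price c := by
      rw [integral_add hX hD_int]
      exact EReal.coe_le_coe_iff.2 (by linarith)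

end PricingMeasure

section Existence

open Asymptotics

variable {n : ℕ} {c : Fin n → ℝ → ℝ} {P : Set (Path n)} {s₀ : ℝ}

theorem exists_pathWeight_mem_superhedging (hP : P ⊆ Omega n s₀) (c : Fin n → ℝ → ℝ) :
    ∃ p, (⇑(pathWeight n), p) ∈ superhedging c P := by
  refine ⟨_, superhedging_mono (calls_mem_superhedging (le_max_right s₀ 0) (1 + max s₀ 0) 1)
    (fun ω hω ↦ ?_) le_rfl⟩
  have := norm_le_add_sum_call (hP hω) (le_max_left s₀ 0)
  simp only [pathWeight, ContinuousMap.coe_mk, Pi.one_apply, one_mul]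
  linarith

theorem exists_excess_mem_superhedging (hP : P ⊆ Omega n s₀) (hc : CondC3 c) {ε : ℝ}
    (hε : 0 < ε) :
    ∃ K : ℝ, ((fun ω ↦ max (2 * (‖ω‖ - K)) 0), ε) ∈ superhedging c P := by
  have hlim : Tendsto (fun K ↦ 0 + ∑ i, (2 : Fin n → ℝ) i * c i K) atTop (𝓝 0) := by
    simpa using tendsto_finsetSum Finset.univ fun i _ ↦ (hc i).const_mul 2
  obtain ⟨K, hKε, hKs, hK⟩ := ((hlim.eventually_le_const hε).and
    ((eventually_ge_atTop s₀).and (eventually_ge_atTop 0))).exists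
  refine ⟨K, superhedging_mono (calls_mem_superhedging hK 0 2) (fun ω hω ↦ ?_) hKε⟩
  have hnorm := norm_le_add_sum_call (hP hω) hKs
  have hsum : 0 ≤ ∑ i : Fin n, max (ω i.succ - K) 0 :=
    Finset.sum_nonneg fun i _ ↦ le_max_right _ _
  simp only [Pi.ofNat_apply, zero_add, ← Finset.mul_sum]
  exact max_le (by linarith) (by linarith)

theorem convex_setOf_le_coe (x : EReal) : Convex ℝ {a : ℝ | x ≤ a} :=
  OrdConnected.convex ⟨fun _ ha _ _ _ hb ↦ ha.trans (EReal.coe_le_coe_iff.2 hb.1)⟩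

theorem exists_isPricingMeasure (hP : P ⊆ Omega n s₀) (hc : CondC3 c) {G : Path n → EReal}
    {w : Path n → ℝ} (hw : Continuous w) (hwO : w =O[⊤] pathWeight n) (hGw : ∀ ω ∈ P, G ω ≤ w ω)
    {v : ℝ} (hv : (v : EReal) ≤ V Static.callPayoff c P G) :
    ∃ Q, IsPricingMeasure c P Q ∧ ∀ b : Path n → ℝ, Continuous b → b =O[⊤] pathWeight n →
      (∀ ω ∈ P, G ω ≤ b ω) → v ≤ ∫ ω, b ω ∂Q := by
  let coeFn : weightedContinuous (pathWeight n) →ₗ[ℝ] Path n → ℝ :=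
    ContinuousMap.coeFnLinearMap ℝ ∘ₗ Submodule.subtype _
  let D := (superhedging c P).comap (coeFn.prodMap LinearMap.id)
  let B : Set (weightedContinuous (pathWeight n)) := {b | ∀ ω ∈ P, G ω ≤ coeFn b ω}
  have hB : Convex ℝ B := fun f hf g hg a b ha hb hab ω hω ↦
    convex_setOf_le_coe (G ω) (hf ω hω) (hg ω hω) ha hb hab
  have hneg : ∀ f ≤ 0, (f, 0) ∈ D := fun f hf ↦
    superhedging_mono (cash_mem_superhedging 0) (fun ω _ ↦ hf ω) le_rfl
  have htight : ∀ ε > 0, ∃ K, IsCompact K ∧ ∃ e : weightedContinuous (pathWeight n),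
      0 ≤ e ∧ (∀ ω ∉ K, pathWeight n ω ≤ (e : C(Path n, ℝ)) ω) ∧ (e, ε) ∈ D := by
    intro ε hε
    obtain ⟨K, hK⟩ := exists_excess_mem_superhedging hP hc hε
    refine ⟨Metric.closedBall 0 (2 * K + 1), isCompact_closedBall _ _,
      ⟨⟨fun ω ↦ max (2 * (‖ω‖ - K)) 0, by fun_prop⟩, isBigO_pathWeight_posPart ?_⟩,
      fun ω ↦ le_max_right _ _, fun ω hω ↦ ?_, hK⟩
    · exact (isBigO_pathWeight_norm.sub (isBigO_pathWeight_const K)).const_mul_left 2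
    · have hω' : 2 * K + 1 < ‖ω‖ := by simpa using hω
      exact le_max_of_le_left (by simp only [pathWeight, ContinuousMap.coe_mk]; linarith)
  obtain ⟨Q, hQ_int, hQ_le, hvQ⟩ := exists_measure_integral_le_of_convex pathWeight_pos hneg
    (exists_pathWeight_mem_superhedging hP c) htight hB ⟨⟨⟨w, hw⟩, hwO⟩, hGw⟩
    fun b hb p hp ↦ EReal.coe_le_coe_iff.1 (hv.trans (V_le_of_mem_superhedging hp hb))
  exact ⟨Q, ⟨fun f hf hfO ↦ hQ_int ⟨⟨f, hf⟩, hfO⟩, fun f hf hfO ↦ hQ_le ⟨⟨f, hf⟩, hfO⟩⟩,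
    fun b hb hbO ↦ hvQ ⟨⟨b, hb⟩, hbO⟩⟩

end Existence

section Duality

open Asymptotics
open scoped BoundedContinuousFunction

variable {n : ℕ} {c : Fin n → ℝ → ℝ} {P : Set (Path n)} {s₀ : ℝ} {G : Path n → EReal}

theorem exists_calibrated_le_eexpE (hP : P ⊆ Omega n s₀) (hP_closed : IsClosed P)
    (hc : CondC3 c) (hG_usc : UpperSemicontinuousOn G P) {w : Path n → ℝ} (hw : Continuous w)
    (hwO : w =O[⊤] pathWeight n) (hGw : ∀ ω ∈ P, G ω ≤ w ω) {v : ℝ}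
    (hv : (v : EReal) ≤ V Static.callPayoff c P G) :
    ∃ Q, Calibrated Static.callPayoff c P Q ∧ (v : EReal) ≤ eexpE Q G := by
  obtain ⟨Q, hQ, hvQ⟩ := exists_isPricingMeasure hP hc hw hwO hGw hv
  have := hQ.isProbabilityMeasure
  refine ⟨Q, hQ.calibrated hP_closed, ?_⟩
  calc (v : EReal)
    _ ≤ eexpE Q (P.piecewise G ⊥) := by
      refine le_eexpE_of_forall_le_integral_sub hw (hQ.integrable w hw hwO)
        (upperSemicontinuous_piecewise_bot hP_closed hG_usc)
        (piecewise_le hGw fun _ _ ↦ bot_le) fun f _ hf ↦ ?_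
      refine hvQ _ (hw.sub f.continuous)
        (hwO.sub (isBigO_pathWeight_of_bounded f.norm_coe_le_norm)) fun ω hω ↦ ?_
      simpa [hω] using hf ω
    _ ≤ eexpE Q G := eexpE_mono_ae <| .of_forall <| piecewise_le (fun _ _ ↦ le_rfl)
      fun _ _ ↦ bot_le

theorem Calibrated.eexpE_le_V {Q : Measure (Path n)} (hQ : Calibrated Static.callPayoff c P Q)
    (hP : MeasurableSet P) (G : Path n → EReal) :
    eexpE Q G ≤ V Static.callPayoff c P G := by
  obtain ⟨hQ_prob, hQ_one, hQ_le⟩ := hQ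
  refine le_sInf ?_
  rintro _ ⟨X, D, hD, rfl, hX⟩
  calc eexpE Q G
    _ ≤ eexpE Q (fun ω ↦ ((X.callPayoff ω + D.gains ω : ℝ) : EReal)) :=
      eexpE_mono_ae <| mem_of_superset ((mem_ae_iff_prob_eq_one hP).2 hQ_one) hX
    _ = eexp Q (fun ω ↦ X.callPayoff ω + D.gains ω) := eexpE_coe _
    _ ≤ X.price c := hQ_le X D hD

end Duality

section CallPrices

variable {n : ℕ} {c : Fin n → ℝ → ℝ} {P : Set (Path n)} {G : Path n → EReal}

theorem robustArbitrage_of_zero_mem_superhedging {p : ℝ} (h : (0, p) ∈ superhedging c P)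
    (hp : p < 0) : RobustArbitrage Static.callPayoff c P :=
  let ⟨X, D, hD, hXp, hX⟩ := h
  ⟨X, D, hD, hXp.trans_lt hp, hX⟩

theorem RobustArbitrage.V_eq_bot (h : RobustArbitrage Static.callPayoff c P) {f : Path n → ℝ}
    {q : ℝ} (hf : (f, q) ∈ superhedging c P) (hGf : ∀ ω ∈ P, G ω ≤ f ω) :
    V Static.callPayoff c P G = ⊥ := by
  obtain ⟨X, D, hD, hp, hX⟩ := h
  refine (EReal.eq_bot_iff_forall_lt _).2 fun y ↦ ?_
  obtain ⟨t, ht⟩ := exists_nat_gt ((y - q) / X.price c)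
  have hmem : (0, X.price c) ∈ superhedging c P := ⟨X, D, hD, rfl, hX⟩
  have hft : (f, q + t * X.price c) ∈ superhedging c P := by
    simpa using (superhedging c P).add_mem hf ((superhedging c P).smul_mem t.cast_nonneg hmem)
  refine (V_le_of_mem_superhedging hft hGf).trans_lt (EReal.coe_lt_coe_iff.2 ?_)
  rw [div_lt_iff_of_neg hp] at ht
  linarith

theorem call_mem_superhedging {K : ℝ} (hK : 0 ≤ K) (i : Fin n) (a : ℝ) :
    (fun ω ↦ a * max (ω i.succ - K) 0, a * c i K) ∈ superhedging c P := by
  simpa [Pi.single_apply] using calls_mem_superhedging (c := c) (P := P) hK 0 (Pi.single i a)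

theorem call_price_nonneg (h : ¬RobustArbitrage Static.callPayoff c P) (i : Fin n) {K : ℝ}
    (hK : 0 ≤ K) : 0 ≤ c i K := by
  by_contra! hneg
  refine h (robustArbitrage_of_zero_mem_superhedging
    (superhedging_mono (call_mem_superhedging hK i 1) (fun ω _ ↦ ?_) le_rfl) (by simpa using hneg))
  simp

theorem call_price_antitoneOn (h : ¬RobustArbitrage Static.callPayoff c P) (i : Fin n) :
    AntitoneOn (c i) (Ici 0) := by
  intro K (hK : 0 ≤ K) L (hL : 0 ≤ L) hKL
  by_contra! hlt
  refine h (robustArbitrage_of_zero_mem_superhedging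
    (superhedging_mono ((superhedging c P).add_mem (call_mem_superhedging hK i 1)
      (call_mem_superhedging hL i (-1))) (fun ω _ ↦ ?_) le_rfl) (by linarith))
  have : max (ω i.succ - L) 0 ≤ max (ω i.succ - K) 0 := by gcongr
  simpa using this

theorem condC3_of_forall_tendsto_nonpos (h : ¬RobustArbitrage Static.callPayoff c P)
    (hc : ∀ i L, Tendsto (c i) atTop (𝓝 L) → L ≤ 0) : CondC3 c := by
  intro i
  have hanti : Antitone fun K ↦ c i (max K 0) := fun K L hKL ↦
    call_price_antitoneOn h i (le_max_right K 0) (le_max_right L 0) (by gcongr)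
  have hnonneg (K : ℝ) : 0 ≤ c i (max K 0) := call_price_nonneg h i (le_max_right K 0)
  have hlim : Tendsto (c i) atTop (𝓝 (⨅ K, c i (max K 0))) :=
    (tendsto_atTop_ciInf hanti ⟨0, forall_mem_range.2 hnonneg⟩).congr' <| by
      filter_upwards [eventually_ge_atTop 0] with K hK
      rw [max_eq_left hK]
  rwa [(hc i _ hlim).antisymm (le_ciInf hnonneg)] at hlim

theorem wflvr_of_tendsto_call_price {i : Fin n} {L : ℝ} (hc : Tendsto (c i) atTop (𝓝 L))
    (hL : 0 < L) : WFLVR Static.callPayoff c P := by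
  let X (k : ℕ) : Static n := .callsAt k.cast_nonneg 0 (Pi.single i (-1))
  have hpay (k : ℕ) (ω : Path n) : (X k).callPayoff ω = -max (ω i.succ - k) 0 := by
    simp [X, Static.callPayoff_callsAt, Pi.single_apply]
  have hprice (k : ℕ) : (X k).price c = -c i k := by
    simp [X, Static.price_callsAt, Pi.single_apply]
  refine ⟨X, 0, X 0, 0, -L, fun _ ↦ Dyn.nonneg_zero, Dyn.nonneg_zero, fun ω _ ↦ ?_,
    fun k ω _ ↦ ?_, ?_, neg_lt_zero.2 hL⟩
  · refine tendsto_const_nhds.congr' ?_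
    filter_upwards [tendsto_natCast_atTop_atTop.eventually_ge_atTop (ω i.succ)] with k hk
    simp [hpay, Dyn.gains_zero, hk]
  · have : max (ω i.succ - k) 0 ≤ max (ω i.succ - (0 : ℕ)) 0 := by
      gcongr
      exact k.zero_le
    simpa [hpay, Dyn.gains_zero] using this
  · simp only [hprice]
    exact (hc.comp tendsto_natCast_atTop_atTop).neg

end CallPrices

theorem duality_calls_general {n : ℕ} {s₀ : ℝ} {P : Set (Path n)} (hPsub : P ⊆ Omega n s₀)
    (hPclosed : IsClosed P) {c : Fin n → ℝ → ℝ}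
    (hc : ∀ i L, Tendsto (c i) atTop (𝓝 L) → L ≤ 0) {G : Path n → EReal}
    (hGusc : UpperSemicontinuousOn G P) {K : ℝ}
    (hG : ∀ ω ∈ P, G ω ≤ ((K * (1 + ∑ i : Fin n, ω i.succ) : ℝ) : EReal)) :
    (⨆ Q ∈ {Q : Measure (Path n) | Calibrated Static.callPayoff c P Q}, eexpE Q G) =
      V Static.callPayoff c P G := by
  refine le_antisymm (iSup₂_le fun Q hQ ↦ hQ.eexpE_le_V hPclosed.measurableSet G) ?_
  by_cases harb : RobustArbitrage Static.callPayoff c P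
  · rw [harb.V_eq_bot (linear_mem_superhedging hPsub c K) hG]
    exact bot_le
  refine EReal.ge_of_forall_gt_iff_ge.1 fun v hv ↦ ?_
  obtain ⟨Q, hQ, hvQ⟩ := exists_calibrated_le_eexpE hPsub hPclosed
    (condC3_of_forall_tendsto_nonpos harb hc) hGusc (by fun_prop) (isBigO_pathWeight_linear K)
    hG hv.le
  exact hvQ.trans (le_iSup₂ (f := fun Q _ ↦ eexpE Q G) Q hQ)

/-- Theorem 3.3, robust pricing–hedging duality with traded calls:
if the market input admits no WFLVR and `G` is upper semi-continuous with linear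
growth, then the supremum of `E_ℙ[G]` over market calibrated models equals the
superhedging price. -/
theorem duality_calls
    {n : ℕ} (hn : 1 ≤ n) {s₀ : ℝ} (hs₀ : 0 < s₀)
    (P : Set (Path n)) (hPsub : P ⊆ Omega n s₀) (hPclosed : IsClosed P)
    (c : Fin n → ℝ → ℝ)
    (hNA : ¬ WFLVR Static.callPayoff c P)
    (G : (Fin n → ℝ) → EReal) (hGtop : ∀ s, G s ≠ ⊤)
    (hGusc : UpperSemicontinuousOn G {s | ∀ i, 0 ≤ s i})
    (K : ℝ) (hG : ∀ s : Fin n → ℝ, (∀ i, 0 ≤ s i) → G s ≤ ((K * (1 + ∑ i, s i) : ℝ) : EReal)) :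
    (⨆ Q ∈ {Q : Measure (Path n) | Calibrated Static.callPayoff c P Q},
        eexpE Q (fun ω => G (tailCoords ω))) =
      V Static.callPayoff c P (fun ω => G (tailCoords ω)) :=
  have htail {ω : Path n} (hω : ω ∈ P) (i : Fin n) : 0 ≤ tailCoords ω i := (hPsub hω).2 i.succ
  duality_calls_general hPsub hPclosed
    (fun _ _ hlim ↦ le_of_not_gt fun hL ↦ hNA (wflvr_of_tendsto_call_price hlim hL))
    (hGusc.comp (g := tailCoords) (by unfold tailCoords; fun_prop) fun _ ↦ htail)
    fun ω hω ↦ hG (tailCoords ω) (htail hω)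

end RobustFin
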